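/- Let U, Π, Π̃ and a singular value decomposition A := Π̃UΠ = ∑_{i=1}^{d_min} ς_i ψ̃_iψ_i† be as in the context. Suppose P_ℜ ∈ ℝ[x] has degree at most n (n ≥ 1), parity (n mod 2), and |P_ℜ(x)| ≤ 1 for all x ∈ [−1,1]. Then there exists Φ ∈ ℝ^n such that: if n is odd, (Π̃ U_Φ Π + Π̃ U_{−Φ} Π)/2 = ∑_{i=1}^{d_min} P_ℜ(ς_i) ψ̃_iψ_i†; and if n is even, (Π U_Φ Π + Π U_{−Φ} Π)/2 = ∑_{i=1}^{d} P_ℜ(ς_i) ψ_iψ_i† (with ς_i := 0 for i > d_min). (This is the paper's single-extra-qubit linear combination written out as the average of U_Φ and U_{−Φ}.) -/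

import Mathlib

/-!
The proof reduces to a scalar problem and solves it by quantum signal processing.

On a pair of singular vectors `u = ψ i`, `v = ψ̃ i` with singular value `x`, the alternating sequence
only moves between the span of `u`, `U† v` and the span of `v`, `U u`, and its coordinates follow
the recursion `qsp`, that is, the product of the matrices `e^{iφ_j σ_z} R(x)` with `R(x)` a reflection
(`altSeq_mulVec`). Compressing by the projections leaves the first coordinate of `qsp`. Negating all
phases conjugates it, so the average over `Φ` and `-Φ` is its real part, and it remains to find
phases for which this real part is the given polynomial `P`.

* Completion (`exists_completion`): there are real `B`, `Q` of the right degrees and parities with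
  `P² + B² + (1 - x²) Q² = 1`. As `1 - P²` is even, it is `H(x²)` with `H ≥ 0` on `[0, 1]`, and the
  form `B² + (1 - x²) C²` is multiplicative; so `H` is treated factor by factor along its complex
  roots (`sqDecomp_of_nonneg`).
* Phase extraction (`exists_qsp_phases`): the pair `P + iB`, `Q` has unit norm, which forces equal
  moduli of the leading coefficients; a suitable phase makes them cancel when the leftmost factor
  is removed, and the degree drops. After `n` steps only a global phase is left, which is absorbed
  into the first phase.
-/

open Polynomial Matrix

/-- A real polynomial has parity `n mod 2`: coefficients of opposite parity vanish. -/
def HasParityR (n : ℕ) (P : Polynomial ℝ) : Prop :=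
  ∀ j, j % 2 ≠ n % 2 → P.coeff j = 0

/-- The operator `e^{iφ(2Q−I)} = e^{iφ}Q + e^{−iφ}(I−Q)` for a projector `Q`. -/
noncomputable def phaseOp {N : ℕ} (Q : Matrix (Fin N) (Fin N) ℂ) (φ : ℝ) :
    Matrix (Fin N) (Fin N) ℂ :=
  Complex.exp (Complex.I * φ) • Q + Complex.exp (-(Complex.I * φ)) • (1 - Q)

/-- The alternating phase modulation sequence `U_Φ` with phases `Φ 1, …, Φ n`. -/
noncomputable def altSeq {N : ℕ} (U Pr PrT : Matrix (Fin N) (Fin N) ℂ) (n : ℕ)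
    (Φ : ℕ → ℝ) : Matrix (Fin N) (Fin N) ℂ :=
  if n % 2 = 1 then
    phaseOp PrT (Φ 1) * U *
      ((List.range ((n - 1) / 2)).map
        (fun j => phaseOp Pr (Φ (2 * j + 2)) * Uᴴ * phaseOp PrT (Φ (2 * j + 3)) * U)).prod
  else
    ((List.range (n / 2)).map
      (fun j => phaseOp Pr (Φ (2 * j + 1)) * Uᴴ * phaseOp PrT (Φ (2 * j + 2)) * U)).prod

/-! ### Squares decomposition of nonnegative polynomials -/

/-- `P` has degree at most `n` and parity `n mod 2`. -/
def DegPar {R : Type*} [Semiring R] (n : ℕ) (P : R[X]) : Prop :=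
  ∀ j, (n < j ∨ j % 2 ≠ n % 2) → P.coeff j = 0

/-- `Q` has degree at most `n - 1` and parity `n - 1 mod 2`, the subtraction being over `ℤ`: for
`n = 0` this means `Q = 0`. -/
def DegParPred {R : Type*} [Semiring R] (n : ℕ) (Q : R[X]) : Prop :=
  ∀ j, (n ≤ j ∨ j % 2 = n % 2) → Q.coeff j = 0

section DegPar
variable {R : Type*} [CommRing R] {m n : ℕ} {P Q : R[X]}

lemma DegPar.natDegree_le (h : DegPar n P) : P.natDegree ≤ n :=
  natDegree_le_iff_coeff_eq_zero.2 fun j hj => h j (Or.inl hj)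

lemma DegParPred.natDegree_le (h : DegParPred (n + 1) Q) : Q.natDegree ≤ n :=
  natDegree_le_iff_coeff_eq_zero.2 fun j hj => h j (Or.inl hj)

lemma DegPar.add (hP : DegPar n P) (hQ : DegPar n Q) : DegPar n (P + Q) := fun j hj => by
  rw [coeff_add, hP j hj, hQ j hj, add_zero]

lemma DegPar.sub (hP : DegPar n P) (hQ : DegPar n Q) : DegPar n (P - Q) := fun j hj => by
  rw [coeff_sub, hP j hj, hQ j hj, sub_zero]

lemma DegParPred.add (hP : DegParPred n P) (hQ : DegParPred n Q) : DegParPred n (P + Q) :=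
  fun j hj => by rw [coeff_add, hP j hj, hQ j hj, add_zero]

lemma DegPar.mul (hP : DegPar m P) (hQ : DegPar n Q) : DegPar (m + n) (P * Q) := by
  intro j hj
  rw [coeff_mul]
  refine Finset.sum_eq_zero fun ab hab => ?_
  rw [Finset.HasAntidiagonal.mem_antidiagonal] at hab
  by_cases h : m < ab.1 ∨ ab.1 % 2 ≠ m % 2
  · rw [hP _ h, zero_mul]
  · rw [hQ ab.2 (by omega), mul_zero]

lemma DegPar.mul_pred (hP : DegPar m P) (hQ : DegParPred n Q) : DegParPred (m + n) (P * Q) := by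
  intro j hj
  rw [coeff_mul]
  refine Finset.sum_eq_zero fun ab hab => ?_
  rw [Finset.HasAntidiagonal.mem_antidiagonal] at hab
  by_cases h : m < ab.1 ∨ ab.1 % 2 ≠ m % 2
  · rw [hP _ h, zero_mul]
  · rw [hQ ab.2 (by omega), mul_zero]

lemma DegParPred.mul (hP : DegParPred m P) (hQ : DegParPred n Q) : DegPar (m + n) (P * Q) := by
  intro j hj
  rw [coeff_mul]
  refine Finset.sum_eq_zero fun ab hab => ?_
  rw [Finset.HasAntidiagonal.mem_antidiagonal] at hab
  by_cases h : m ≤ ab.1 ∨ ab.1 % 2 = m % 2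
  · rw [hP _ h, zero_mul]
  · rw [hQ ab.2 (by omega), mul_zero]

lemma DegParPred.X_mul (hQ : DegParPred n Q) : DegPar n (X * Q) := by
  rintro (_ | j) hj
  · simp
  · rw [coeff_X_mul]
    exact hQ j (by omega)

end DegPar

/-- `H(x²)` is a sum `B(x)² + (1 - x²) C(x)²` with `B`, `C` of degrees at most `n`, `n - 1` and of
the corresponding parities. -/
def SqDecomp (n : ℕ) (H : ℝ[X]) : Prop :=
  ∃ B C : ℝ[X], DegPar n B ∧ DegParPred n C ∧
    expand ℝ 2 H = B ^ 2 + (1 - X ^ 2) * C ^ 2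

/-- Brahmagupta's identity for the form `B² + (1 - x²) C²`. -/
lemma SqDecomp.mul {m n : ℕ} {H K : ℝ[X]} (hH : SqDecomp m H) (hK : SqDecomp n K) :
    SqDecomp (m + n) (H * K) := by
  obtain ⟨B, C, hB, hC, h⟩ := hH
  obtain ⟨B', C', hB', hC', h'⟩ := hK
  refine ⟨B * B' - (C * C' - X * C * (X * C')), B * C' + C * B',
    (hB.mul hB').sub ((hC.mul hC').sub (hC.X_mul.mul hC'.X_mul)),
    (hB.mul_pred hC').add ?_, ?_⟩
  · rw [mul_comm, add_comm]
    exact hB'.mul_pred hC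
  · rw [map_mul, h, h']
    ring

lemma sqDecomp_const {c : ℝ} (hc : 0 ≤ c) : SqDecomp 0 (C c) := by
  refine ⟨C √c, 0, fun j hj => ?_, fun j _ => by simp, ?_⟩
  · rw [coeff_C, if_neg (by omega)]
  · rw [expand_C, ← C_pow, Real.sq_sqrt hc]
    ring

/-- Linear factors: with `β² = l(0)`, `α² = l(1)`, one has `l(x²) = (αx)² + (1 - x²) β²`. -/
lemma sqDecomp_linear {a b : ℝ} (h0 : 0 ≤ b) (h1 : 0 ≤ a + b) :
    SqDecomp 1 (C a * X + C b) := by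
  refine ⟨C √(a + b) * X, C √b, fun j hj => ?_, fun j hj => ?_, ?_⟩
  · rw [coeff_C_mul, coeff_X, if_neg (by omega), mul_zero]
  · rw [coeff_C, if_neg (by omega)]
  · rw [mul_pow, ← C_pow, ← C_pow, Real.sq_sqrt h0, Real.sq_sqrt h1]
    simp only [map_add, map_mul, expand_C, expand_X]
    ring

/-- Quadratic factors `q(y) = |y - w|²`: with `B(x) = (β + γ) x² - β`, where `β² = q(0)` and
`γ² = q(1)`, the difference `q(x²) - B(x)²` vanishes at `x = 0` and `x = 1`, hence is a multiple of
`x² (1 - x²)`. The coefficient is nonnegative by the triangle inequality. -/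
lemma sqDecomp_quadratic (w : ℂ) :
    SqDecomp 2 (X ^ 2 - C (2 * w.re) * X + C (‖w‖ ^ 2)) := by
  have htri : 1 ≤ ‖w‖ + ‖1 - w‖ := by
    have := norm_add_le w (1 - w)
    simpa using this
  have h1 : ‖1 - w‖ ^ 2 = 1 - 2 * w.re + ‖w‖ ^ 2 := by
    rw [← Complex.normSq_eq_norm_sq, ← Complex.normSq_eq_norm_sq, Complex.normSq_apply,
      Complex.normSq_apply]
    simp
    ring
  set β := ‖w‖ with hβ
  set γ := ‖1 - w‖ with hγ
  have hg : 0 ≤ (β + γ) ^ 2 - 1 := by nlinarith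
  refine ⟨C (β + γ) * X ^ 2 - C β, C √((β + γ) ^ 2 - 1) * X, fun j hj => ?_, fun j hj => ?_, ?_⟩
  · rw [coeff_sub, coeff_C_mul, coeff_X_pow, coeff_C, if_neg (by omega), if_neg (by omega)]
    simp
  · rw [coeff_C_mul, coeff_X, if_neg (by omega), mul_zero]
  · rw [mul_pow (C √_), ← C_pow, Real.sq_sqrt hg]
    have h2 : 2 * w.re = 1 + β ^ 2 - γ ^ 2 := by linarith
    rw [h2]
    simp only [map_add, map_sub, map_mul, map_pow, expand_C, expand_X, map_one]
    ring

lemma SqDecomp.mono {m n : ℕ} {H : ℝ[X]} (hH : SqDecomp m H) (hmn : m ≤ n) : SqDecomp n H := by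
  induction n, hmn using Nat.le_induction with
  | base => exact hH
  | succ k _ ih =>
    have h := ih.mul (sqDecomp_linear (a := 0) (b := 1) (by norm_num) (by norm_num))
    simpa using h

/-- Nonnegativity on `[0, 1]` passes to the cofactor of a nonzero nonnegative factor: the zeros of
the factor have dense complement. -/
lemma nonneg_of_mul_nonneg {q K : ℝ[X]} (hq0 : q ≠ 0)
    (hq : ∀ x ∈ Set.Icc (0 : ℝ) 1, 0 ≤ q.eval x)
    (hqK : ∀ x ∈ Set.Icc (0 : ℝ) 1, 0 ≤ (q * K).eval x) :
    ∀ x ∈ Set.Icc (0 : ℝ) 1, 0 ≤ K.eval x := by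
  have hd : Dense ({x : ℝ | q.IsRoot x}ᶜ) :=
    (finite_setOfPred_isRoot hq0).countable.dense_compl ℝ
  have hc : IsClosed {x : ℝ | 0 ≤ K.eval x} := isClosed_le continuous_const K.continuous
  have hsub : Set.Ioo (0 : ℝ) 1 ∩ {x : ℝ | q.IsRoot x}ᶜ ⊆ {x : ℝ | 0 ≤ K.eval x} := by
    rintro x ⟨hx, hxr⟩
    have hx' := Set.Ioo_subset_Icc_self hx
    have hpos : 0 < q.eval x := lt_of_le_of_ne (hq x hx') (Ne.symm hxr)
    have := hqK x hx'
    rw [eval_mul] at this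
    exact nonneg_of_mul_nonneg_right this hpos
  have h1 : Set.Ioo (0 : ℝ) 1 ⊆ {x : ℝ | 0 ≤ K.eval x} :=
    (hd.open_subset_closure_inter isOpen_Ioo).trans (closure_minimal hsub hc)
  have h2 := closure_minimal h1 hc
  rw [closure_Ioo (by norm_num)] at h2
  exact fun x hx => h2 hx

lemma quadratic_eval_nonneg (w : ℂ) (x : ℝ) :
    0 ≤ (X ^ 2 - C (2 * w.re) * X + C (‖w‖ ^ 2) : ℝ[X]).eval x := by
  have : ‖w‖ ^ 2 = w.re ^ 2 + w.im ^ 2 := by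
    rw [← Complex.normSq_eq_norm_sq, Complex.normSq_apply]; ring
  simp only [eval_add, eval_sub, eval_mul, eval_pow, eval_X, eval_C, this]
  nlinarith [sq_nonneg (x - w.re), sq_nonneg w.im]

lemma natDegree_quadratic (w : ℂ) :
    (X ^ 2 - C (2 * w.re) * X + C (‖w‖ ^ 2) : ℝ[X]).natDegree = 2 := by
  compute_degree!

/-- A factor of a polynomial nonnegative on `[0, 1]` that is itself nonnegative there can be
split off. -/
lemma sqDecomp_of_factor {k : ℕ} {q H : ℝ[X]} (hk : q.natDegree = k) (hk0 : 0 < k)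
    (hqd : SqDecomp k q) (hq : ∀ x ∈ Set.Icc (0 : ℝ) 1, 0 ≤ q.eval x)
    (hH0 : H ≠ 0) (hH : ∀ x ∈ Set.Icc (0 : ℝ) 1, 0 ≤ H.eval x) (hdvd : q ∣ H)
    (ih : ∀ K : ℝ[X], K.natDegree < H.natDegree → (∀ x ∈ Set.Icc (0 : ℝ) 1, 0 ≤ K.eval x) →
      SqDecomp K.natDegree K) :
    SqDecomp H.natDegree H := by
  obtain ⟨K, rfl⟩ := hdvd
  have hq0 : q ≠ 0 := left_ne_zero_of_mul hH0
  have hdeg := natDegree_mul hq0 (right_ne_zero_of_mul hH0)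
  rw [hdeg, hk]
  exact hqd.mul (ih K (by omega) (nonneg_of_mul_nonneg hq0 hq hH))

/-- The Markov–Lukács theorem in the variable `y = x²`: polynomials nonnegative on `[0, 1]` are
of the form `B(x)² + (1 - x²) C(x)²`. The proof is by induction on the degree, splitting off the
factor belonging to a complex root. -/
theorem sqDecomp_of_nonneg (H : ℝ[X]) (hH : ∀ x ∈ Set.Icc (0 : ℝ) 1, 0 ≤ H.eval x) :
    SqDecomp H.natDegree H := by
  induction hm : H.natDegree using Nat.strong_induction_on generalizing H with
  | _ m IH =>
  subst hm
  have ih : ∀ K : ℝ[X], K.natDegree < H.natDegree →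
      (∀ x ∈ Set.Icc (0 : ℝ) 1, 0 ≤ K.eval x) → SqDecomp K.natDegree K :=
    fun K hK hK' => IH K.natDegree hK K hK' rfl
  rcases Nat.eq_zero_or_pos H.natDegree with h0 | hpos
  · obtain ⟨c, rfl⟩ := natDegree_eq_zero.1 h0
    rw [natDegree_C]
    exact sqDecomp_const (by simpa using hH 0 (by norm_num))
  have hH0 : H ≠ 0 := by rintro rfl; simp at hpos
  obtain ⟨w, hw⟩ := Complex.exists_root (f := H.map (algebraMap ℝ ℂ)) (by
    rw [degree_map]; exact natDegree_pos_iff_degree_pos.1 hpos)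
  have hw' : aeval w H = 0 := by
    rwa [IsRoot, eval_map_algebraMap] at hw
  by_cases him : w.im = 0
  swap
  · exact sqDecomp_of_factor (natDegree_quadratic w) two_pos (sqDecomp_quadratic w)
      (fun x _ => quadratic_eval_nonneg w x) hH0 hH
      (H.quadratic_dvd_of_aeval_eq_zero_im_ne_zero hw' him) ih
  obtain ⟨r, rfl⟩ : ∃ r : ℝ, w = (r : ℂ) := ⟨w.re, Complex.ext (by simp) (by simp [him])⟩
  have hr : H.eval r = 0 := by
    have : ((H.eval r : ℝ) : ℂ) = 0 := by
      rw [← hw']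
      exact (aeval_algebraMap_apply_eq_algebraMap_eval (A := ℂ) r H).symm
    exact_mod_cast this
  have hdvd : X - C r ∣ H := dvd_iff_isRoot.2 hr
  rcases le_or_gt r 0 with hr0 | hr0
  · refine sqDecomp_of_factor (k := 1) (q := C 1 * X + C (-r)) ?_ one_pos
      (sqDecomp_linear (by linarith) (by linarith)) ?_ hH0 hH ?_ ih
    · compute_degree!
    · intro x hx; simp; linarith [hx.1]
    · simpa [sub_eq_add_neg] using hdvd
  rcases le_or_gt 1 r with hr1 | hr1
  · refine sqDecomp_of_factor (k := 1) (q := C (-1) * X + C r) ?_ one_pos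
      (sqDecomp_linear (by linarith) (by linarith)) ?_ hH0 hH ?_ ih
    · compute_degree!
    · intro x hx; simp; linarith [hx.2]
    · have : (C (-1) * X + C r : ℝ[X]) = -(X - C r) := by simp; ring
      rw [this, neg_dvd]
      exact hdvd
  -- A root interior to `[0, 1]` is a local minimum, hence a double root.
  · obtain ⟨K, hK⟩ := hdvd
    have hmin : IsLocalMin (fun x => H.eval x) r := by
      filter_upwards [Icc_mem_nhds hr0 hr1] with x hx
      rw [hr]
      exact hH x hx
    have hder := hmin.deriv_eq_zero
    rw [Polynomial.deriv, hK] at hder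
    have hKr : K.IsRoot r := by simpa using hder
    obtain ⟨L, hL⟩ := dvd_iff_isRoot.2 hKr
    refine sqDecomp_of_factor (natDegree_quadratic r) two_pos (sqDecomp_quadratic r)
      (fun x _ => quadratic_eval_nonneg r x) hH0 hH ⟨L, ?_⟩ ih
    have h2 : (C 2 : ℝ[X]) = 2 := map_ofNat C 2
    rw [hK, hL]
    simp [h2]
    ring

/-- Completion: a real polynomial bounded by `1` on `[-1, 1]` is the real part of the corner of an
`SU(2)`-valued polynomial. -/
theorem exists_completion {n : ℕ} {P : ℝ[X]} (hP : DegPar n P)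
    (hbnd : ∀ x : ℝ, x ∈ Set.Icc (-1 : ℝ) 1 → |P.eval x| ≤ 1) :
    ∃ B Q : ℝ[X], DegPar n B ∧ DegParPred n Q ∧
      P ^ 2 + B ^ 2 + (1 - X ^ 2) * Q ^ 2 = 1 := by
  have hPP := hP.mul hP
  have hexp : expand ℝ 2 (contract 2 (P * P)) = P * P := by
    ext j
    rw [coeff_expand two_pos]
    split_ifs with h
    · rw [coeff_contract two_ne_zero, Nat.div_mul_cancel h]
    · rw [hPP j (by omega)]
  set H : ℝ[X] := 1 - contract 2 (P * P) with hHdef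
  have hHexp : expand ℝ 2 H = 1 - P * P := by rw [hHdef, map_sub, hexp, map_one]
  have hdeg : H.natDegree ≤ n := by
    refine natDegree_le_iff_coeff_eq_zero.2 fun j hj => ?_
    rw [hHdef, coeff_sub, coeff_contract two_ne_zero, hPP _ (by omega), coeff_one,
      if_neg (by omega), sub_zero]
  have hnn : ∀ y ∈ Set.Icc (0 : ℝ) 1, 0 ≤ H.eval y := by
    intro y hy
    have h1 : H.eval y = 1 - P.eval √y * P.eval √y := by
      have := congrArg (eval √y) hHexp
      rw [expand_eval, Real.sq_sqrt hy.1] at this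
      rw [this]
      simp
    have h2 := hbnd √y ⟨by linarith [Real.sqrt_nonneg y], Real.sqrt_le_one.2 hy.2⟩
    rw [h1]
    nlinarith [abs_le.1 h2]
  obtain ⟨B, Q, hB, hQ, h⟩ := (sqDecomp_of_nonneg H hnn).mono hdeg
  refine ⟨B, Q, hB, hQ, ?_⟩
  rw [hHexp] at h
  linear_combination -h

/-! ### Quantum signal processing -/

/-- The signal-processing recursion at signal value `x`: the first column of the product of the
`n` factors `e^{iφ_j σ_z} R(x)`, where `R(x)` is the reflection with rows `(x, √(1-x²))` and
`(√(1-x²), -x)`; the second entry is divided by `√(1-x²)`. As in `altSeq`, the phases are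
`Φ 1, …, Φ n`, with `Φ 1` belonging to the leftmost factor. -/
noncomputable def qsp : ℕ → (ℕ → ℝ) → ℝ → ℂ × ℂ
  | 0, _, _ => (1, 0)
  | n + 1, Φ, x =>
    (Complex.exp (Complex.I * Φ 1) *
        (x * (qsp n (fun j => Φ (j + 1)) x).1 + (1 - x ^ 2) * (qsp n (fun j => Φ (j + 1)) x).2),
      Complex.exp (-(Complex.I * Φ 1)) *
        ((qsp n (fun j => Φ (j + 1)) x).1 - x * (qsp n (fun j => Φ (j + 1)) x).2))

lemma qsp_congr {n : ℕ} {Φ Ψ : ℕ → ℝ} (h : ∀ j, 1 ≤ j → Φ j = Ψ j) (x : ℝ) :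
    qsp n Φ x = qsp n Ψ x := by
  induction n generalizing Φ Ψ with
  | zero => rfl
  | succ n ih =>
    simp only [qsp]
    rw [ih (Φ := fun j => Φ (j + 1)) (Ψ := fun j => Ψ (j + 1)) (fun j _ => h _ (by omega)),
      h 1 le_rfl]

lemma conj_exp_I_mul (t : ℝ) :
    (starRingEnd ℂ) (Complex.exp (Complex.I * t)) = Complex.exp (-(Complex.I * t)) := by
  rw [← Complex.exp_conj]
  simp

lemma exp_mul_exp_neg (z : ℂ) : Complex.exp z * Complex.exp (-z) = 1 := by
  rw [← Complex.exp_add, add_neg_cancel, Complex.exp_zero]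

lemma qsp_neg (n : ℕ) (Φ : ℕ → ℝ) (x : ℝ) :
    qsp n (fun j => -(Φ j)) x =
      ((starRingEnd ℂ) (qsp n Φ x).1, (starRingEnd ℂ) (qsp n Φ x).2) := by
  induction n generalizing Φ with
  | zero => simp [qsp]
  | succ n ih =>
    have h := conj_exp_I_mul (Φ 1)
    have h' := conj_exp_I_mul (-(Φ 1))
    simp only [Complex.ofReal_neg, mul_neg, neg_neg] at h'
    simp only [qsp, ih (fun j => Φ (j + 1)), map_mul, map_add, map_sub, map_pow, map_one,
      Complex.conj_ofReal, h, h', Complex.ofReal_neg, mul_neg, neg_neg]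

/-- Complex numbers of equal modulus can be aligned by opposite phases. -/
lemma exists_phase {p q : ℂ} (h : p * (starRingEnd ℂ) p = q * (starRingEnd ℂ) q) :
    ∃ φ : ℝ, Complex.exp (-(Complex.I * φ)) * p = Complex.exp (Complex.I * φ) * q := by
  have hn : ‖p‖ = ‖q‖ := by
    rw [Complex.mul_conj', Complex.mul_conj'] at h
    have h2 : ‖p‖ ^ 2 = ‖q‖ ^ 2 := by exact_mod_cast h
    exact (sq_eq_sq₀ (norm_nonneg _) (norm_nonneg _)).1 h2
  refine ⟨(p.arg - q.arg) / 2, ?_⟩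
  have hp := Complex.norm_mul_exp_arg_mul_I p
  have hq := Complex.norm_mul_exp_arg_mul_I q
  generalize p.arg = a at *
  generalize q.arg = b at *
  rw [← hp, ← hq, hn, mul_left_comm, ← Complex.exp_add, mul_left_comm, ← Complex.exp_add]
  congr 2
  push_cast
  ring

/-- One step of phase extraction: the top coefficients of `P` and `Q` have equal modulus, so the phase
`φ` can be chosen to make them cancel when the leftmost factor `e^{iφσ_z} R(x)` is removed, which lowers the degree. -/
lemma exists_layer {n : ℕ} {P Q : ℂ[X]} (hP : DegPar (n + 1) P) (hQ : DegParPred (n + 1) Q)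
    (hPQ : P * P.map (starRingEnd ℂ) + (1 - X ^ 2) * (Q * Q.map (starRingEnd ℂ)) = 1) :
    ∃ (φ : ℝ) (P' Q' : ℂ[X]), DegPar n P' ∧ DegParPred n Q' ∧
      P' * P'.map (starRingEnd ℂ) + (1 - X ^ 2) * (Q' * Q'.map (starRingEnd ℂ)) = 1 ∧
      P = C (Complex.exp (Complex.I * φ)) * (X * P' + (1 - X ^ 2) * Q') ∧
      Q = C (Complex.exp (-(Complex.I * φ))) * (P' - X * Q') := by
  have hPm : (P.map (starRingEnd ℂ)).natDegree ≤ n + 1 := natDegree_map_le.trans hP.natDegree_le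
  have hQm : (Q.map (starRingEnd ℂ)).natDegree ≤ n := natDegree_map_le.trans hQ.natDegree_le
  have htop : P.coeff (n + 1) * (starRingEnd ℂ) (P.coeff (n + 1)) =
      Q.coeff n * (starRingEnd ℂ) (Q.coeff n) := by
    have h := congrArg (fun R : ℂ[X] => R.coeff (n + n + 2)) hPQ
    have h1 : (P * P.map (starRingEnd ℂ)).coeff (n + n + 2) =
        P.coeff (n + 1) * (starRingEnd ℂ) (P.coeff (n + 1)) := by
      have := coeff_mul_add_eq_of_natDegree_le hP.natDegree_le hPm
      rw [coeff_map] at this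
      rw [← this]
      congr 1
      ring
    have h2 : (Q * Q.map (starRingEnd ℂ)).coeff (n + n) =
        Q.coeff n * (starRingEnd ℂ) (Q.coeff n) := by
      have := coeff_mul_add_eq_of_natDegree_le hQ.natDegree_le hQm
      rwa [coeff_map] at this
    have h3 : (Q * Q.map (starRingEnd ℂ)).coeff (n + n + 2) = 0 :=
      coeff_eq_zero_of_natDegree_lt (lt_of_le_of_lt
        (natDegree_mul_le_of_le hQ.natDegree_le hQm) (by omega))
    simp only [sub_mul, one_mul, coeff_add, coeff_sub, coeff_X_pow_mul, h1, h2, h3,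
      coeff_one] at h
    rw [if_neg (by omega)] at h
    linear_combination h
  obtain ⟨φ, hφ⟩ := exists_phase htop
  have hee := exp_mul_exp_neg (Complex.I * φ)
  have hcE := conj_exp_I_mul φ
  have hcF : (starRingEnd ℂ) (Complex.exp (-(Complex.I * φ))) = Complex.exp (Complex.I * φ) := by
    rw [← hcE, Complex.conj_conj]
  refine ⟨φ, ?_⟩
  generalize Complex.exp (Complex.I * φ) = e at *
  generalize Complex.exp (-(Complex.I * φ)) = f at *
  have hef : (C e * C f : ℂ[X]) = 1 := by rw [← C_mul, hee, C_1]
  refine ⟨X * (C f * P) + (1 - X ^ 2) * (C e * Q), C f * P - X * (C e * Q), ?_, ?_, ?_, ?_, ?_⟩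
  · intro j hj
    simp only [sub_mul, one_mul, coeff_add, coeff_sub, coeff_X_pow_mul', coeff_C_mul]
    rcases j with _ | _ | j
    · simp only [coeff_X_mul_zero]
      rw [hQ 0 (by omega)]
      simp
    · simp only [coeff_X_mul, coeff_C_mul]
      rw [hP 0 (by omega), hQ 1 (by omega)]
      simp
    · simp only [coeff_X_mul, coeff_C_mul]
      rw [hQ (j + 1 + 1) (by omega), if_pos (by omega), show j + 1 + 1 - 2 = j by omega]
      by_cases hjn : j = n
      · subst hjn
        linear_combination hφ
      · rw [hP (j + 1) (by omega), hQ j (by omega)]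
        simp
  · intro j hj
    rcases j with _ | j
    · simp only [coeff_sub, coeff_X_mul_zero, coeff_C_mul]
      rw [hP 0 (by omega)]
      simp
    · simp only [coeff_sub, coeff_X_mul, coeff_C_mul]
      by_cases hjn : j = n
      · subst hjn
        linear_combination hφ
      · rw [hP (j + 1) (by omega), hQ j (by omega)]
        simp
  · simp only [Polynomial.map_add, Polynomial.map_sub, Polynomial.map_mul, Polynomial.map_pow,
      Polynomial.map_one, map_X, map_C, hcE, hcF]
    linear_combination (C e * C f) * hPQ + hef
  · linear_combination (-P) * hef
  · linear_combination (-Q) * hef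

/-- Quantum signal processing: every pair `P`, `Q` of the right degrees and parities with
`|P|² + (1 - x²) |Q|² = 1` on the real line comes from phases, up to a global phase. -/
lemma exists_qsp_phases {n : ℕ} {P Q : ℂ[X]} (hP : DegPar n P) (hQ : DegParPred n Q)
    (hPQ : P * P.map (starRingEnd ℂ) + (1 - X ^ 2) * (Q * Q.map (starRingEnd ℂ)) = 1) :
    ∃ (Φ : ℕ → ℝ) (χ : ℝ), ∀ x : ℝ,
      P.eval (x : ℂ) = Complex.exp (Complex.I * χ) * (qsp n Φ x).1 ∧
      Q.eval (x : ℂ) = Complex.exp (Complex.I * χ) * (qsp n Φ x).2 := by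
  induction n generalizing P Q with
  | zero =>
    have hQ0 : Q = 0 := by
      ext j
      exact hQ j (by omega)
    have hPC : P = C (P.coeff 0) := eq_C_of_natDegree_le_zero hP.natDegree_le
    generalize P.coeff 0 = c at hPC
    subst hPC hQ0
    have hc : ‖c‖ = 1 := by
      rw [zero_mul, mul_zero, add_zero, map_C, ← C_mul, ← C_1, C_inj, Complex.mul_conj'] at hPQ
      have h2 : ‖c‖ ^ 2 = 1 := by exact_mod_cast hPQ
      exact (pow_eq_one_iff_of_nonneg (norm_nonneg _) two_ne_zero).1 h2
    refine ⟨fun _ => 0, c.arg, fun x => ?_⟩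
    have := Complex.norm_mul_exp_arg_mul_I c
    rw [hc, mul_comm (c.arg : ℂ)] at this
    simpa [qsp] using this.symm
  | succ n ih =>
    obtain ⟨φ, P', Q', hP', hQ', hPQ', rfl, rfl⟩ := exists_layer hP hQ hPQ
    obtain ⟨Φ, χ, h⟩ := ih hP' hQ' hPQ'
    refine ⟨fun j => if j = 1 then φ else Φ (j - 1), χ, fun x => ?_⟩
    have hΦ : qsp n (fun j => if j + 1 = 1 then φ else Φ (j + 1 - 1)) x = qsp n Φ x :=
      qsp_congr (fun j hj => by rw [if_neg (by omega), Nat.add_sub_cancel]) x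
    obtain ⟨h1, h2⟩ := h x
    simp only [qsp, hΦ, if_true, eval_add, eval_sub, eval_mul, eval_C, eval_X, eval_pow,
      eval_one, h1, h2]
    constructor <;> ring

/-- A global phase is absorbed into the leftmost phase as far as the first entry is concerned. -/
lemma exists_qsp_eq_mul (n : ℕ) (Φ : ℕ → ℝ) (χ : ℝ) : ∃ Ψ : ℕ → ℝ, ∀ x : ℝ,
    (qsp (n + 1) Ψ x).1 = Complex.exp (Complex.I * χ) * (qsp (n + 1) Φ x).1 := by
  refine ⟨fun j => if j = 1 then χ + Φ 1 else Φ j, fun x => ?_⟩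
  have hΦ : qsp n (fun j => if j + 1 = 1 then χ + Φ 1 else Φ (j + 1)) x =
      qsp n (fun j => Φ (j + 1)) x :=
    qsp_congr (fun j hj => by rw [if_neg (by omega)]) x
  simp only [qsp, hΦ, if_true]
  rw [← mul_assoc, ← Complex.exp_add]
  push_cast
  ring_nf

/-- Phases realizing a bounded real polynomial as the average over `Φ` and `-Φ`. -/
theorem exists_qsp_real {n : ℕ} (hn : 1 ≤ n) {P : ℝ[X]} (hP : DegPar n P)
    (hbnd : ∀ x : ℝ, x ∈ Set.Icc (-1 : ℝ) 1 → |P.eval x| ≤ 1) :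
    ∃ Φ : ℕ → ℝ, ∀ x : ℝ,
      (1 / 2 : ℂ) * ((qsp n Φ x).1 + (qsp n (fun j => -(Φ j)) x).1) = (P.eval x : ℝ) := by
  obtain ⟨n, rfl⟩ := Nat.exists_eq_add_of_le' hn
  obtain ⟨B, Q, hB, hQ, h⟩ := exists_completion hP hbnd
  have hconj : (starRingEnd ℂ).comp Complex.ofRealHom = Complex.ofRealHom := by
    ext x; simp
  have hI : (C Complex.I * C Complex.I : ℂ[X]) = -1 := by
    rw [← C_mul, Complex.I_mul_I]; simp
  obtain ⟨Φ, χ, hΦ⟩ := exists_qsp_phases (n := n + 1)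
    (P := P.map Complex.ofRealHom + C Complex.I * B.map Complex.ofRealHom)
    (Q := Q.map Complex.ofRealHom)
    (fun j hj => by simp [hP j hj, hB j hj]) (fun j hj => by simp [hQ j hj]) (by
      have h' := congrArg (Polynomial.map Complex.ofRealHom) h
      simp only [Polynomial.map_add, Polynomial.map_sub, Polynomial.map_mul, Polynomial.map_pow,
        Polynomial.map_one, map_X] at h'
      simp only [Polynomial.map_add, Polynomial.map_mul, Polynomial.map_map, hconj, map_C,
        Complex.conj_I, C_neg]
      linear_combination h' - (B.map Complex.ofRealHom) ^ 2 * hI)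
  obtain ⟨Ψ, hΨ⟩ := exists_qsp_eq_mul n Φ χ
  refine ⟨Ψ, fun x => ?_⟩
  have hx : (qsp (n + 1) Ψ x).1 = (P.eval x : ℝ) + Complex.I * (B.eval x : ℝ) := by
    rw [hΨ, ← (hΦ x).1]
    have e : ∀ R : ℝ[X], (R.map Complex.ofRealHom).eval (x : ℂ) = (R.eval x : ℝ) := fun R =>
      (eval_map_apply Complex.ofRealHom x)
    rw [eval_add, eval_mul, eval_C, e, e]
  rw [qsp_neg, hx]
  simp only [map_add, map_mul, Complex.conj_ofReal, Complex.conj_I]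
  ring

/-! ### Action of the alternating sequence on singular vectors -/

section Matrix
variable {N : ℕ}

@[simp] lemma altSeq_zero (U Pr PrT : Matrix (Fin N) (Fin N) ℂ) (Φ : ℕ → ℝ) :
    altSeq U Pr PrT 0 Φ = 1 := by
  simp [altSeq]

/-- Peeling off the leftmost factor when the remaining length is even. -/
lemma altSeq_succ_of_even (U Pr PrT : Matrix (Fin N) (Fin N) ℂ) {n : ℕ} (hn : n % 2 = 0)
    (Φ : ℕ → ℝ) : altSeq U Pr PrT (n + 1) Φ =
      phaseOp PrT (Φ 1) * U * altSeq U Pr PrT n (fun j => Φ (j + 1)) := by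
  rw [altSeq, altSeq, if_pos (by omega), if_neg (by omega), Nat.add_sub_cancel]

/-- Peeling off the leftmost factor when the remaining length is odd. -/
lemma altSeq_succ_of_odd (U Pr PrT : Matrix (Fin N) (Fin N) ℂ) {n : ℕ} (hn : n % 2 = 1)
    (Φ : ℕ → ℝ) : altSeq U Pr PrT (n + 1) Φ =
      phaseOp Pr (Φ 1) * Uᴴ * altSeq U Pr PrT n (fun j => Φ (j + 1)) := by
  rw [altSeq, altSeq, if_neg (by omega), if_pos hn,
    show (n + 1) / 2 = (n - 1) / 2 + 1 by omega, List.range_succ_eq_map, List.map_cons,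
    List.prod_cons, List.map_map]
  simp only [Matrix.mul_assoc]
  rfl

lemma phaseOp_mulVec (Q : Matrix (Fin N) (Fin N) ℂ) (φ : ℝ) (v : Fin N → ℂ) :
    phaseOp Q φ *ᵥ v = Complex.exp (Complex.I * φ) • (Q *ᵥ v) +
      Complex.exp (-(Complex.I * φ)) • (v - Q *ᵥ v) := by
  rw [phaseOp, add_mulVec, smul_mulVec, smul_mulVec, sub_mulVec, one_mulVec]

/-- One step of the sequence, from the span of `u`, `V v` to that of `v`, `W u`, where `V` is the
inverse of `W`: the coordinates transform as in `qsp`. It is used with `(T, W)` equal to `(Π̃, U)`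
and, with the roles of `u` and `v` exchanged, to `(Π, U†)`. Writing the second basis vector as
`q • V v - x * q • u`, which is `q • (1 - Π) V v`, keeps the formula valid when that vector
vanishes, so singular values `0` and `1` need no separate treatment. -/
lemma phaseOp_step {T W V : Matrix (Fin N) (Fin N) ℂ} (hWV : W * V = 1) {u v : Fin N → ℂ}
    {x : ℝ} (hv : T *ᵥ v = v) (hu : T *ᵥ (W *ᵥ u) = (x : ℂ) • v) (φ : ℝ) (p q : ℂ) :
    (phaseOp T φ * W) *ᵥ ((p - x * q) • u + q • (V *ᵥ v)) =
      (Complex.exp (Complex.I * φ) * (x * p + (1 - x ^ 2) * q) -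
        x * (Complex.exp (-(Complex.I * φ)) * (p - x * q))) • v +
      (Complex.exp (-(Complex.I * φ)) * (p - x * q)) • (W *ᵥ u) := by
  have hWVv : W *ᵥ (V *ᵥ v) = v := by rw [mulVec_mulVec, hWV, one_mulVec]
  rw [← mulVec_mulVec, phaseOp_mulVec]
  simp only [mulVec_add, mulVec_smul, hWVv, hu, hv]
  module

/-- `altSeq` acts on a pair of singular vectors `u`, `v` with singular value `x` through the
scalar recursion `qsp`. The case `v = 0`, `x = 0` is allowed and covers vectors `u` killed by
`Π̃ U`. -/
lemma altSeq_mulVec {U Pr PrT : Matrix (Fin N) (Fin N) ℂ} (hU1 : U * Uᴴ = 1) (hU2 : Uᴴ * U = 1)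
    {u v : Fin N → ℂ} {x : ℝ} (hu : Pr *ᵥ u = u) (hv : PrT *ᵥ v = v)
    (huv : PrT *ᵥ (U *ᵥ u) = (x : ℂ) • v) (hvu : Pr *ᵥ (Uᴴ *ᵥ v) = (x : ℂ) • u)
    (n : ℕ) (Φ : ℕ → ℝ) :
    (n % 2 = 0 → altSeq U Pr PrT n Φ *ᵥ u =
      ((qsp n Φ x).1 - x * (qsp n Φ x).2) • u + (qsp n Φ x).2 • (Uᴴ *ᵥ v)) ∧
    (n % 2 = 1 → altSeq U Pr PrT n Φ *ᵥ u =
      ((qsp n Φ x).1 - x * (qsp n Φ x).2) • v + (qsp n Φ x).2 • (U *ᵥ u)) := by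
  induction n generalizing Φ with
  | zero => simp [qsp]
  | succ n ih =>
    obtain ⟨ih0, ih1⟩ := ih (fun j => Φ (j + 1))
    refine ⟨fun h => ?_, fun h => ?_⟩
    · have hn : n % 2 = 1 := by omega
      rw [altSeq_succ_of_odd _ _ _ hn, ← mulVec_mulVec, ih1 hn, phaseOp_step hU2 hu hvu]
      rfl
    · have hn : n % 2 = 0 := by omega
      rw [altSeq_succ_of_even _ _ _ hn, ← mulVec_mulVec, ih0 hn, phaseOp_step hU1 hv huv]
      rfl

lemma mul_proj {d : ℕ} (M : Matrix (Fin N) (Fin N) ℂ) (ψ : Fin d → Fin N → ℂ) :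
    M * ∑ i, vecMulVec (ψ i) (star (ψ i)) = ∑ i, vecMulVec (M *ᵥ ψ i) (star (ψ i)) := by
  rw [Finset.mul_sum]
  simp only [mul_vecMulVec]

lemma proj_mulVec {d : ℕ} {ψ : Fin d → Fin N → ℂ}
    (hON : ∀ i j, star (ψ i) ⬝ᵥ ψ j = if i = j then 1 else 0) (i : Fin d) :
    (∑ k, vecMulVec (ψ k) (star (ψ k))) *ᵥ ψ i = ψ i := by
  rw [sum_mulVec, Finset.sum_eq_single i]
  · rw [vecMulVec_mulVec, hON, if_pos rfl]
    simp
  · intro k _ hk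
    rw [vecMulVec_mulVec, hON, if_neg hk]
    simp
  · simp

/-- The action of `∑ ς_k a_k b_k†`, with `k` ranging over part of an orthonormal family `b`, on a
member of that family: it is scaled to the corresponding `a`, or annihilated. -/
lemma svd_mulVec {m d : ℕ} (hm : m ≤ d) {b : Fin d → Fin N → ℂ}
    (hb : ∀ i j, star (b i) ⬝ᵥ b j = if i = j then 1 else 0)
    (a : Fin m → Fin N → ℂ) (s : ℕ → ℝ) (i : Fin d) :
    (∑ k : Fin m, ((s k : ℝ) : ℂ) • vecMulVec (a k) (star (b (Fin.castLE hm k)))) *ᵥ b i =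
      if h : (i : ℕ) < m then ((s i : ℝ) : ℂ) • a ⟨i, h⟩ else 0 := by
  rw [sum_mulVec]
  have key : ∀ k : Fin m, (((s k : ℝ) : ℂ) •
      vecMulVec (a k) (star (b (Fin.castLE hm k)))) *ᵥ b i =
      if (k : ℕ) = i then ((s k : ℝ) : ℂ) • a k else 0 := by
    intro k
    rw [smul_mulVec, vecMulVec_mulVec, hb]
    by_cases hk : (k : ℕ) = i
    · rw [if_pos (Fin.ext hk), if_pos hk]
      simp
    · rw [if_neg (fun h => hk (congrArg Fin.val h)), if_neg hk]
      simp
  simp only [key]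
  split_ifs with h
  · rw [Finset.sum_eq_single (⟨i, h⟩ : Fin m)]
    · simp
    · intro k _ hk
      exact if_neg fun hki => hk (Fin.ext hki)
    · simp
  · refine Finset.sum_eq_zero fun k _ => if_neg fun hki => h (by omega)

end Matrix

theorem singular_value_transformation_real (N d dt : ℕ)
    (U Pr PrT : Matrix (Fin N) (Fin N) ℂ)
    (hU : U ∈ Matrix.unitaryGroup (Fin N) ℂ)
    (hPrProj : Prᴴ = Pr ∧ Pr * Pr = Pr)
    (hPrTProj : PrTᴴ = PrT ∧ PrT * PrT = PrT)
    (ψ : Fin d → Fin N → ℂ) (ψt : Fin dt → Fin N → ℂ)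
    (hON : ∀ i j, star (ψ i) ⬝ᵥ ψ j = if i = j then 1 else 0)
    (hONt : ∀ i j, star (ψt i) ⬝ᵥ ψt j = if i = j then 1 else 0)
    (hPreq : Pr = ∑ i, vecMulVec (ψ i) (star (ψ i)))
    (hPrTeq : PrT = ∑ i, vecMulVec (ψt i) (star (ψt i)))
    (ς : ℕ → ℝ) (hςnn : ∀ i, 0 ≤ ς i) (hς0 : ∀ i, min d dt ≤ i → ς i = 0)
    (hSVD : PrT * U * Pr = ∑ i : Fin (min d dt),
      ((ς i.val : ℝ) : ℂ) • vecMulVec (ψt (Fin.castLE (min_le_right d dt) i))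
        (star (ψ (Fin.castLE (min_le_left d dt) i))))
    (n : ℕ) (hn : 1 ≤ n) (PRe : Polynomial ℝ)
    (hdeg : PRe.degree ≤ (n : WithBot ℕ)) (hpar : HasParityR n PRe)
    (hbnd : ∀ x : ℝ, x ∈ Set.Icc (-1 : ℝ) 1 → |PRe.eval x| ≤ 1) :
    ∃ Φ : ℕ → ℝ,
      (Odd n →
        ((1 : ℂ) / 2) • (PrT * altSeq U Pr PrT n Φ * Pr +
            PrT * altSeq U Pr PrT n (fun j => -(Φ j)) * Pr) =
          ∑ i : Fin (min d dt), ((PRe.eval (ς i.val) : ℝ) : ℂ) •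
            vecMulVec (ψt (Fin.castLE (min_le_right d dt) i))
              (star (ψ (Fin.castLE (min_le_left d dt) i)))) ∧
      (Even n →
        ((1 : ℂ) / 2) • (Pr * altSeq U Pr PrT n Φ * Pr +
            Pr * altSeq U Pr PrT n (fun j => -(Φ j)) * Pr) =
          ∑ i : Fin d, ((PRe.eval (ς i.val) : ℝ) : ℂ) • vecMulVec (ψ i) (star (ψ i))) := by
  obtain ⟨Φ, hΦ⟩ := exists_qsp_real hn (P := PRe) (fun j hj => by
    rcases hj with hj | hj
    · exact coeff_eq_zero_of_degree_lt (lt_of_le_of_lt hdeg (by exact_mod_cast hj))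
    · exact hpar j hj) hbnd
  have hU1 : U * Uᴴ = 1 := mem_unitaryGroup_iff.1 hU
  have hU2 : Uᴴ * U = 1 := mem_unitaryGroup_iff'.1 hU
  have hPrψ : ∀ i, Pr *ᵥ ψ i = ψ i := fun i => hPreq ▸ proj_mulVec hON i
  have hPrTψ : ∀ i, PrT *ᵥ ψt i = ψt i := fun i => hPrTeq ▸ proj_mulVec hONt i
  -- The partner of `ψ i`; the zero vector, with singular value `0`, when there is none.
  let v : Fin d → Fin N → ℂ := fun i =>
    if h : (i : ℕ) < min d dt then ψt (Fin.castLE (min_le_right d dt) ⟨i, h⟩) else 0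
  have hv : ∀ i, PrT *ᵥ v i = v i := by
    intro i
    by_cases h : (i : ℕ) < min d dt
    · simp only [v, dif_pos h, hPrTψ]
    · simp only [v, dif_neg h, mulVec_zero]
  have huv : ∀ i, PrT *ᵥ (U *ᵥ ψ i) = ((ς i : ℝ) : ℂ) • v i := by
    intro i
    have h1 := svd_mulVec (min_le_left d dt) hON
      (fun k => ψt (Fin.castLE (min_le_right d dt) k)) ς i
    rw [← hSVD, ← mulVec_mulVec, hPrψ, ← mulVec_mulVec] at h1
    rw [h1]
    by_cases h : (i : ℕ) < min d dt
    · simp only [v, dif_pos h]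
    · simp only [v, dif_neg h, smul_zero]
  have hSVD' : Pr * Uᴴ * PrT = ∑ i : Fin (min d dt),
      ((ς i.val : ℝ) : ℂ) • vecMulVec (ψ (Fin.castLE (min_le_left d dt) i))
        (star (ψt (Fin.castLE (min_le_right d dt) i))) := by
    have h1 := congrArg conjTranspose hSVD
    rw [conjTranspose_mul, conjTranspose_mul, hPrProj.1, hPrTProj.1, conjTranspose_sum] at h1
    rw [Matrix.mul_assoc, h1]
    refine Finset.sum_congr rfl fun i _ => ?_
    rw [conjTranspose_smul, conjTranspose_vecMulVec, star_star]
    simp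
  have hvu : ∀ i, Pr *ᵥ (Uᴴ *ᵥ v i) = ((ς i : ℝ) : ℂ) • ψ i := by
    intro i
    by_cases h : (i : ℕ) < min d dt
    · have h1 := svd_mulVec (min_le_right d dt) hONt
        (fun k => ψ (Fin.castLE (min_le_left d dt) k)) ς
        (Fin.castLE (min_le_right d dt) ⟨i, h⟩)
      rw [← hSVD', ← mulVec_mulVec, hPrTψ, ← mulVec_mulVec] at h1
      simp only [v, dif_pos h]
      rw [h1]
      exact dif_pos h
    · simp only [v, dif_neg h, mulVec_zero]
      rw [hς0 i (not_lt.1 h)]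
      simp
  have hact := fun i => altSeq_mulVec hU1 hU2 (hPrψ i) (hv i) (huv i) (hvu i) n
  have hmain : ∀ M : Matrix (Fin N) (Fin N) ℂ,
      ((1 : ℂ) / 2) • (M * altSeq U Pr PrT n Φ * Pr + M * altSeq U Pr PrT n (fun j => -(Φ j)) * Pr) =
        ∑ i, vecMulVec (((1 : ℂ) / 2) • (M *ᵥ (altSeq U Pr PrT n Φ *ᵥ ψ i) +
          M *ᵥ (altSeq U Pr PrT n (fun j => -(Φ j)) *ᵥ ψ i))) (star (ψ i)) := by
    intro M
    generalize altSeq U Pr PrT n Φ = S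
    generalize altSeq U Pr PrT n (fun j => -(Φ j)) = S'
    rw [← add_mul, ← mul_add, ← smul_mul]
    conv_lhs => rw [hPreq]
    rw [mul_proj]
    refine Finset.sum_congr rfl fun i _ => ?_
    rw [smul_mulVec, ← mulVec_mulVec, add_mulVec, mulVec_add]
  refine ⟨Φ, fun hodd => ?_, fun heven => ?_⟩
  · have hn1 : n % 2 = 1 := Nat.odd_iff.1 hodd
    have hone : ∀ i Ψ, PrT *ᵥ (altSeq U Pr PrT n Ψ *ᵥ ψ i) = (qsp n Ψ (ς i)).1 • v i := by
      intro i Ψ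
      rw [(hact i Ψ).2 hn1]
      simp only [mulVec_add, mulVec_smul, hv, huv]
      module
    rw [hmain]
    simp only [hone, ← add_smul, smul_smul, hΦ]
    symm
    refine Fintype.sum_of_injective (Fin.castLE (min_le_left d dt)) (Fin.castLE_injective _) _ _ ?_ ?_
    · intro i hi
      have h : ¬ (i : ℕ) < min d dt := fun h => hi ⟨⟨i, h⟩, rfl⟩
      simp only [v, dif_neg h, smul_zero, zero_vecMulVec]
    · intro i
      have h : ((Fin.castLE (min_le_left d dt) i : Fin d) : ℕ) < min d dt := i.2
      simp only [v, dif_pos h]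
      rw [smul_vecMulVec]
      rfl
  · have hn0 : n % 2 = 0 := Nat.even_iff.1 heven
    have hone : ∀ i Ψ, Pr *ᵥ (altSeq U Pr PrT n Ψ *ᵥ ψ i) = (qsp n Ψ (ς i)).1 • ψ i := by
      intro i Ψ
      rw [(hact i Ψ).1 hn0]
      simp only [mulVec_add, mulVec_smul, hPrψ, hvu]
      module
    rw [hmain]
    simp only [hone, ← add_smul, smul_smul, hΦ, smul_vecMulVec]
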